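/- Let ν be a lattice path. The increasing flip poset of the subword complex SC(Q_ν, π_ν) is a lattice. (This settles Rubey's lattice conjecture for permutations of the form w = 1 ⊕ u with u a dominant, i.e., 132-avoiding, permutation: the poset of reduced pipe dreams of such w under chute moves, which coincides with this increasing flip poset, is a lattice.) -/

import Mathlib

open scoped Classical

/-! Lattice paths: `true` = north step, `false` = east step. -/

def eastSteps (ν : List Bool) : ℕ := ν.count false
def northSteps (ν : List Bool) : ℕ := ν.count true

/-- Height at which the path first reaches abscissa `x`. -/
def heightAt : List Bool → ℕ → ℕ
  | _, 0 => 0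
  | [], _ + 1 => 0
  | true :: rest, x + 1 => heightAt rest (x + 1) + 1
  | false :: rest, x + 1 => heightAt rest x

/-- Lattice point of a path after `i` steps. -/
def pointAt (μ : List Bool) (i : ℕ) : ℕ × ℕ :=
  ((μ.take i).count false, (μ.take i).count true)

/-- The set `A_ν` of lattice points weakly above `ν`. -/
def APts (ν : List Bool) : Set (ℕ × ℕ) :=
  {p | p.1 ≤ eastSteps ν ∧ heightAt ν p.1 ≤ p.2 ∧ p.2 ≤ northSteps ν}

def Incompatible (ν : List Bool) (p q : ℕ × ℕ) : Prop :=
  (p.1 < q.1 ∧ p.2 < q.2 ∧ (q.1, p.2) ∈ APts ν) ∨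
    (q.1 < p.1 ∧ q.2 < p.2 ∧ (p.1, q.2) ∈ APts ν)

def Compatible (ν : List Bool) (p q : ℕ × ℕ) : Prop := ¬ Incompatible ν p q

def IsNuTree (ν : List Bool) (T : Set (ℕ × ℕ)) : Prop :=
  T ⊆ APts ν ∧ T.Pairwise (Compatible ν) ∧
    ∀ T', T' ⊆ APts ν → T'.Pairwise (Compatible ν) → T ⊆ T' → T' = T

def IsRightRotationAt (T T' : Set (ℕ × ℕ)) (q q' : ℕ × ℕ) : Prop :=
  ∃ x y x'' y', q = (x, y) ∧ q' = (x'', y') ∧ x < x'' ∧ y < y' ∧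
    (x, y) ∈ T ∧ (x, y') ∈ T ∧ (x'', y) ∈ T ∧
    (∀ b, y < b → b < y' → (x, b) ∉ T) ∧
    (∀ a, x < a → a < x'' → (a, y) ∉ T) ∧
    (∀ a, x < a → a < x'' → (a, y') ∉ T) ∧
    (∀ b, y < b → b < y' → (x'', b) ∉ T) ∧
    T' = (T \ {(x, y)}) ∪ {(x'', y')}

def IsRightRotation (T T' : Set (ℕ × ℕ)) : Prop :=
  ∃ q q', IsRightRotationAt T T' q q'

/-- Order relation of the rotation poset of ν-trees. -/
def TreeLE (ν : List Bool) : Set (ℕ × ℕ) → Set (ℕ × ℕ) → Prop :=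
  Relation.ReflTransGen fun A B => IsNuTree ν A ∧ IsNuTree ν B ∧ IsRightRotation A B

def IsNuPath (ν μ : List Bool) : Prop :=
  eastSteps μ = eastSteps ν ∧ northSteps μ = northSteps ν ∧
    ∀ i ≤ μ.length, pointAt μ i ∈ APts ν

noncomputable def horiz (ν : List Bool) (p : ℕ × ℕ) : ℕ :=
  sSup {k | (p.1 + k, p.2) ∈ APts ν}

/-- Covering relation of the ν-Tamari lattice. -/
def TamariCover (ν μ μ' : List Bool) : Prop :=
  IsNuPath ν μ ∧ IsNuPath ν μ' ∧
    ∃ i j, 0 < i ∧ i < j ∧ j ≤ μ.length ∧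
      μ.getD (i - 1) true = false ∧ μ.getD i false = true ∧
      horiz ν (pointAt μ j) = horiz ν (pointAt μ i) ∧
      (∀ k, i < k → k < j → horiz ν (pointAt μ k) ≠ horiz ν (pointAt μ i)) ∧
      μ' = μ.take (i - 1) ++ (μ.drop i).take (j - i) ++ [false] ++ μ.drop j

def TamariLE (ν : List Bool) : List Bool → List Bool → Prop :=
  Relation.ReflTransGen (TamariCover ν)

/-! Flushing maps -/

def rowAvail (ν : List Bool) (y : ℕ) : List ℕ :=
  ((List.range (eastSteps ν + 1)).filter fun x => decide (heightAt ν x ≤ y)).reverse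

def pointsAtHeight (μ : List Bool) (y : ℕ) : ℕ :=
  ((List.range (μ.length + 1)).filter fun i => decide ((μ.take i).count true = y)).length

def rflushAux (ν : List Bool) : List ℕ → ℕ → List ℕ → List (ℕ × ℕ)
  | [], _, _ => []
  | c :: rest, y, forbidden =>
    let placed := ((rowAvail ν y).filter fun x => decide (x ∉ forbidden)).take c
    placed.map (fun x => (x, y)) ++ rflushAux ν rest (y + 1) (forbidden ++ placed.dropLast)

/-- Right-flushing map `R`. -/
def Rflush (ν μ : List Bool) : Set (ℕ × ℕ) :=
  {p | p ∈ rflushAux ν ((List.range (northSteps ν + 1)).map (pointsAtHeight μ)) 0 []}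

def lflushAux (m : ℕ) : List ℕ → ℕ → List ℕ → List (ℕ × ℕ)
  | [], _, _ => []
  | c :: rest, y, forbidden =>
    let placed := ((List.range (m + 1)).filter fun x => decide (x ∉ forbidden)).take c
    placed.map (fun x => (x, y)) ++ lflushAux m rest (y + 1) (forbidden ++ placed.dropLast)

noncomputable def rowCount (T : Set (ℕ × ℕ)) (y : ℕ) : ℕ := {x | (x, y) ∈ T}.ncard

/-- Left-flushing map `L`. -/
noncomputable def Lflush (ν : List Bool) (T : Set (ℕ × ℕ)) : Set (ℕ × ℕ) :=
  {p | p ∈ lflushAux (eastSteps ν) ((List.range (northSteps ν + 1)).map (rowCount T)) 0 []}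

def pathPointSet (μ : List Bool) : Set (ℕ × ℕ) := {p | ∃ i ≤ μ.length, pointAt μ i = p}

/-! Bracket vectors (0-indexed positions `0,…,ℓ`). -/

noncomputable def fpos (ν : List Bool) (k : ℕ) : ℕ :=
  sSup {i | i ≤ ν.length ∧ (ν.take i).count true = k}

def bmin (ν : List Bool) : List ℕ :=
  (List.range (ν.length + 1)).map fun i => (ν.take i).count true

def IsBracketVector (ν : List Bool) (b : List ℕ) : Prop :=
  b.length = ν.length + 1 ∧
    (∀ k ≤ northSteps ν, b.getD (fpos ν k) 0 = k) ∧
    (∀ i < b.length, (bmin ν).getD i 0 ≤ b.getD i 0 ∧ b.getD i 0 ≤ northSteps ν) ∧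
    ∀ i j k, i < j → j < k → k < b.length →
      ¬(b.getD i 0 = b.getD k 0 ∧ b.getD i 0 < b.getD j 0)

noncomputable def leftChild (T : Set (ℕ × ℕ)) (p : ℕ × ℕ) : Option (ℕ × ℕ) :=
  if ∃ b, (p.1, b) ∈ T ∧ b < p.2 then some (p.1, sSup {b | (p.1, b) ∈ T ∧ b < p.2})
  else none

noncomputable def rightChild (T : Set (ℕ × ℕ)) (p : ℕ × ℕ) : Option (ℕ × ℕ) :=
  if ∃ a, (a, p.2) ∈ T ∧ p.1 < a then
    if ∃ b, (sInf {a | (a, p.2) ∈ T ∧ p.1 < a}, b) ∈ T ∧ p.2 < b then none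
    else some (sInf {a | (a, p.2) ∈ T ∧ p.1 < a}, p.2)
  else none

noncomputable def inorderAux (T : Set (ℕ × ℕ)) : ℕ → ℕ × ℕ → List (ℕ × ℕ)
  | 0, _ => []
  | fuel + 1, p =>
    (match leftChild T p with
      | none => []
      | some l => inorderAux T fuel l) ++ p ::
      (match rightChild T p with
        | none => []
        | some r => inorderAux T fuel r)

/-- Bracket vector of a ν-tree: y-coordinates read in in-order from the root `(0,n)`. -/
noncomputable def bracketOfTree (ν : List Bool) (T : Set (ℕ × ℕ)) : List ℕ :=
  (inorderAux T T.ncard (0, northSteps ν)).map Prod.snd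

noncomputable def bracketAssign (ν μ : List Bool) : List (ℕ × ℕ) :=
  ((List.range (northSteps ν + 1)).foldl
    (fun (st : List (ℕ × ℕ) × List ℕ) k =>
      let picked := ((st.2.filter fun i => decide (i ≤ fpos ν k)).reverse).take
        (pointsAtHeight μ k)
      (st.1 ++ picked.map fun i => (i, k), st.2.filter fun i => decide (i ∉ picked)))
    ([], List.range (ν.length + 1))).1

/-- Bracket vector of a ν-path. -/
noncomputable def bracketOfPath (ν μ : List Bool) : List ℕ :=
  (List.range (ν.length + 1)).map fun i => ((bracketAssign ν μ).lookup i).getD 0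

/-- Componentwise order on (equal length) integer vectors. -/
def listLE (b b' : List ℕ) : Prop :=
  b.length = b'.length ∧ ∀ i, b.getD i 0 ≤ b'.getD i 0

/-! Reversal -/

def revPath (ν : List Bool) : List Bool := ν.reverse.map fun s => !s

def revTree (ν : List Bool) (T : Set (ℕ × ℕ)) : Set (ℕ × ℕ) :=
  (fun p : ℕ × ℕ => (northSteps ν - p.2, eastSteps ν - p.1)) '' T

/-! Pipe dreams and subword complexes -/

def dOf (ν : List Bool) (p : ℕ × ℕ) : ℕ := p.1 + (northSteps ν - p.2)

def labelPerm (ν : List Bool) (p : ℕ × ℕ) : Equiv.Perm ℕ :=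
  Equiv.swap (dOf ν p + 1) (dOf ν p + 2)

/-- The points of `A_ν` in reading order: rows from bottom to top, each left to right. -/
def readingList (ν : List Bool) : List (ℕ × ℕ) :=
  ((List.range (northSteps ν + 1)).map fun y =>
    ((List.range (eastSteps ν + 1)).filter fun x => decide (heightAt ν x ≤ y)).map
      fun x => (x, y)).flatten

/-- The minimal ν-tree. -/
def TminSet (ν : List Bool) : Set (ℕ × ℕ) :=
  {p | p ∈ APts ν ∧ (p.1 = 0 ∨ ∃ i < ν.length, ν.getD i true = false ∧ p = pointAt ν (i + 1))}

noncomputable def prodOver (ν : List Bool) (C : Set (ℕ × ℕ)) : Equiv.Perm ℕ :=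
  (((readingList ν).filter fun p => decide (p ∈ C)).map (labelPerm ν)).prod

/-- Coxeter length: number of inversions. -/
noncomputable def lenInv (π : Equiv.Perm ℕ) : ℕ :=
  {q : ℕ × ℕ | q.1 < q.2 ∧ π q.2 < π q.1}.ncard

noncomputable def piNu (ν : List Bool) : Equiv.Perm ℕ := prodOver ν (APts ν \ TminSet ν)

def Qword (ν : List Bool) : List (Equiv.Perm ℕ) := (readingList ν).map (labelPerm ν)

noncomputable def prodAt (Q : List (Equiv.Perm ℕ)) (P : Finset ℕ) : Equiv.Perm ℕ :=
  (((List.range Q.length).filter fun i => decide (i ∈ P)).map fun i => Q.getD i 1).prod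

def IsFacet (Q : List (Equiv.Perm ℕ)) (π : Equiv.Perm ℕ) (I : Finset ℕ) : Prop :=
  I ⊆ Finset.range Q.length ∧
    prodAt Q (Finset.range Q.length \ I) = π ∧
    (Finset.range Q.length \ I).card = lenInv π

def IncFlip (Q : List (Equiv.Perm ℕ)) (π : Equiv.Perm ℕ) (I J : Finset ℕ) : Prop :=
  IsFacet Q π I ∧ IsFacet Q π J ∧ ∃ i ∈ I, ∃ j ∈ J, i < j ∧ I.erase i = J.erase j

def FlipLE (Q : List (Equiv.Perm ℕ)) (π : Equiv.Perm ℕ) : Finset ℕ → Finset ℕ → Prop :=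
  Relation.ReflTransGen (IncFlip Q π)

/-- The maximal ν-tree. -/
def TmaxSet (ν : List Bool) : Set (ℕ × ℕ) :=
  {p | (p.1 ≤ eastSteps ν ∧ p.2 = northSteps ν) ∨ ∃ i < ν.length, ν.getD i false = true ∧ p = pointAt ν i}

/-! A `ν`-tree is determined by the function sending a column to the height of its highest tree
point. The functions that arise are those for which a column that has a point in the row of a
highest point, to its right, never has a strictly higher highest point. This condition is closed
under pointwise minima, so they form a lattice.

A facet of the subword complex is a set of elbows whose crossings spell `π_ν`. Two incompatible
elbows would send a second pipe below a bound that only one pipe of `π_ν` respects, so facets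
consist of compatible points, and by cardinality they are `ν`-trees. Conversely, a right rotation
exchanges the two corners at which one pair of pipes meets, which does not change the permutation.
An increasing flip never lowers a highest point, and every inequality between functions is reached
by right rotations, so the flip order is the pointwise order. -/

section Inversions

/-- The inversion set of a permutation; `lenInv π` is its cardinality. -/
def inversions (π : Equiv.Perm ℕ) : Set (ℕ × ℕ) := {q | q.1 < q.2 ∧ π q.2 < π q.1}

lemma inversions_one : inversions 1 = ∅ :=
  Set.eq_empty_of_forall_notMem fun _ hq => lt_asymm hq.1 hq.2

variable {w : Equiv.Perm ℕ} {a : ℕ}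

lemma inversions_mul_swap_succ (h : w a < w (a + 1)) :
    inversions (w * Equiv.swap a (a + 1)) =
      insert (a, a + 1)
        (Prod.map (Equiv.swap a (a + 1)) (Equiv.swap a (a + 1)) '' inversions w) := by
  have swap_lt_swap {i j : ℕ} (hij : i < j) (hne : ¬(i = a ∧ j = a + 1)) :
      Equiv.swap a (a + 1) i < Equiv.swap a (a + 1) j := by
    simp only [Equiv.swap_apply_def]
    split_ifs <;> omega
  ext ⟨i, j⟩
  simp only [inversions, Set.mem_ofPred_eq, Equiv.Perm.mul_apply, Set.mem_insert_iff,
    Prod.mk.injEq, Set.mem_image, Prod.exists, Prod.map_apply]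
  constructor
  · rintro ⟨hij, hinv⟩
    refine or_iff_not_imp_left.2 fun hne => ⟨_, _, ⟨swap_lt_swap hij hne, hinv⟩, ?_, ?_⟩ <;> simp
  · rintro (⟨rfl, rfl⟩ | ⟨i, j, ⟨hij, hinv⟩, rfl, rfl⟩)
    · simpa using h
    · refine ⟨swap_lt_swap hij ?_, by simpa using hinv⟩
      rintro ⟨rfl, rfl⟩
      exact h.not_gt hinv

lemma encard_inversions_mul_swap_succ (h : w a < w (a + 1)) :
    (inversions (w * Equiv.swap a (a + 1))).encard = (inversions w).encard + 1 := by
  have notMem : (a, a + 1) ∉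
      Prod.map (Equiv.swap a (a + 1)) (Equiv.swap a (a + 1)) '' inversions w := by
    rintro ⟨⟨i, j⟩, ⟨hij, -⟩, heq⟩
    simp only [Prod.map_apply, Prod.mk.injEq, Equiv.swap_apply_eq_iff, Equiv.swap_apply_left,
      Equiv.swap_apply_right] at heq hij
    omega
  rw [inversions_mul_swap_succ h, Set.encard_insert_of_notMem notMem,
    ((Equiv.injective _).prodMap (Equiv.injective _)).encard_image]

end Inversions

section Words

variable {m n : ℕ} {C : Set (ℕ × ℕ)}

/-- The product of the letters `s_{x + n - y + 1}` over the first `k` cells `(x, y)` of row `y`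
that belong to the crossing set `C`. -/
noncomputable def rowWord (n : ℕ) (C : Set (ℕ × ℕ)) (y k : ℕ) : Equiv.Perm ℕ :=
  ((List.range k).map fun x =>
    if (x, y) ∈ C then Equiv.swap (x + (n + 1 - y)) (x + (n + 1 - y) + 1) else 1).prod

/-- The product of the letters of the crossings `C` in the first `k` rows, read row by row from
the bottom, of the grid with columns `0, …, m` and rows `0, …, n`. -/
noncomputable def gridWord (m n : ℕ) (C : Set (ℕ × ℕ)) (k : ℕ) : Equiv.Perm ℕ :=
  ((List.range k).map fun y => rowWord n C y (m + 1)).prod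

lemma rowWord_zero (y : ℕ) : rowWord n C y 0 = 1 := rfl

lemma rowWord_succ (y k : ℕ) : rowWord n C y (k + 1) = rowWord n C y k *
    if (k, y) ∈ C then Equiv.swap (k + (n + 1 - y)) (k + (n + 1 - y) + 1) else 1 :=
  List.prod_range_succ _ _

lemma gridWord_zero : gridWord m n C 0 = 1 := rfl

lemma gridWord_succ (k : ℕ) :
    gridWord m n C (k + 1) = gridWord m n C k * rowWord n C k (m + 1) :=
  List.prod_range_succ _ _

lemma rowWord_succ_apply_of_ne {y k p : ℕ} (h₁ : p ≠ k + (n + 1 - y))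
    (h₂ : p ≠ k + (n + 1 - y) + 1) : rowWord n C y (k + 1) p = rowWord n C y k p := by
  rw [rowWord_succ, Equiv.Perm.mul_apply]
  split_ifs
  · rw [Equiv.swap_apply_of_ne_of_ne h₁ h₂]
  · rfl

lemma rowWord_apply_of_lt {y p : ℕ} (hp : p < n + 1 - y) (k : ℕ) : rowWord n C y k p = p := by
  induction k with
  | zero => rfl
  | succ k ih => rw [rowWord_succ_apply_of_ne (by omega) (by omega), ih]

lemma rowWord_apply_of_gt {y k p : ℕ} (hp : k + (n + 1 - y) < p) : rowWord n C y k p = p := by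
  induction k with
  | zero => rfl
  | succ k ih => rw [rowWord_succ_apply_of_ne (by omega) (by omega), ih (by omega)]

lemma rowWord_apply_eq_of_le {y k l p : ℕ} (hp : p < k + (n + 1 - y)) (hkl : k ≤ l) :
    rowWord n C y l p = rowWord n C y k p := by
  induction l, hkl using Nat.le_induction with
  | base => rfl
  | succ l hkl ih => rw [rowWord_succ_apply_of_ne (by omega) (by omega), ih]

lemma gridWord_apply_of_le {y p : ℕ} (hp : p + y ≤ n + 1) : gridWord m n C y p = p := by
  induction y with
  | zero => rfl
  | succ y ih =>
    rw [gridWord_succ, Equiv.Perm.mul_apply, rowWord_apply_of_lt (by omega), ih (by omega)]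

end Words

section Pipes

variable {m n : ℕ} {C : Set (ℕ × ℕ)}

/-- The label of the pipe entering the cell `(x, y)` from the left, when the cells of `C` are
crossings and all other cells are elbows. -/
noncomputable def hPipe (m n : ℕ) (C : Set (ℕ × ℕ)) (x y : ℕ) : ℕ :=
  gridWord m n C y (rowWord n C y x (x + (n + 1 - y)))

/-- The label of the pipe entering the cell `(x, y)` from below, when the cells of `C` are
crossings and all other cells are elbows. -/
noncomputable def vPipe (m n : ℕ) (C : Set (ℕ × ℕ)) (x y : ℕ) : ℕ :=
  gridWord m n C y (rowWord n C y x (x + (n + 1 - y) + 1))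

lemma hPipe_zero {y : ℕ} (hy : y ≤ n + 1) : hPipe m n C 0 y = n + 1 - y := by
  rw [hPipe, rowWord_zero, Equiv.Perm.one_apply, Nat.zero_add, gridWord_apply_of_le (by omega)]

lemma vPipe_zero (x : ℕ) : vPipe m n C x 0 = x + n + 2 := by
  rw [vPipe, rowWord_apply_of_gt (by omega), gridWord_zero, Equiv.Perm.one_apply]
  omega

lemma hPipe_succ_of_mem {x y : ℕ} (h : (x, y) ∈ C) : hPipe m n C (x + 1) y = hPipe m n C x y := by
  rw [hPipe, hPipe, rowWord_succ, if_pos h, Equiv.Perm.mul_apply, Nat.add_right_comm,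
    Equiv.swap_apply_right]

lemma hPipe_succ_of_notMem {x y : ℕ} (h : (x, y) ∉ C) :
    hPipe m n C (x + 1) y = vPipe m n C x y := by
  rw [hPipe, vPipe, rowWord_succ, if_neg h, mul_one, Nat.add_right_comm]

lemma vPipe_succ {x y : ℕ} (hx : x ≤ m) (hy : y ≤ n) :
    vPipe m n C x (y + 1) = gridWord m n C y (rowWord n C y (x + 1) (x + (n + 1 - y))) := by
  have position : x + (n + 1 - (y + 1)) + 1 = x + (n + 1 - y) := by omega
  rw [vPipe, rowWord_apply_of_gt (by omega), position, gridWord_succ, Equiv.Perm.mul_apply,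
    rowWord_apply_eq_of_le (k := x + 1) (by omega) (by omega)]

lemma vPipe_succ_of_mem {x y : ℕ} (hx : x ≤ m) (hy : y ≤ n) (h : (x, y) ∈ C) :
    vPipe m n C x (y + 1) = vPipe m n C x y := by
  rw [vPipe_succ hx hy, rowWord_succ, if_pos h, Equiv.Perm.mul_apply, Equiv.swap_apply_left, vPipe]

lemma vPipe_succ_of_notMem {x y : ℕ} (hx : x ≤ m) (hy : y ≤ n) (h : (x, y) ∉ C) :
    vPipe m n C x (y + 1) = hPipe m n C x y := by
  rw [vPipe_succ hx hy, rowWord_succ, if_neg h, mul_one, hPipe]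

lemma vPipe_top (x : ℕ) : vPipe m n C x (n + 1) = gridWord m n C (n + 1) (x + 1) := by
  rw [vPipe, rowWord_apply_of_gt (by omega), Nat.sub_self, Nat.add_zero]

end Pipes

section LowCount

variable {m n : ℕ} {C : Set (ℕ × ℕ)}

/-- The number of pipes with label at most `K` that enter row `y` from below in one of the first
`a` columns. -/
noncomputable def lowCount (m n : ℕ) (C : Set (ℕ × ℕ)) (K a y : ℕ) : ℕ :=
  Nat.count (fun x => vPipe m n C x y ≤ K) a

lemma lowCount_succ_add {K a y : ℕ} (hK : n + 1 ≤ K + y) (hy : y ≤ n) (ha : a ≤ m + 1) :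
    lowCount m n C K a (y + 1) + (if hPipe m n C a y ≤ K then 1 else 0) =
      lowCount m n C K a y + 1 := by
  induction a with
  | zero => rw [hPipe_zero (by omega), if_pos (by omega)]; rfl
  | succ a ih =>
    specialize ih (by omega)
    simp only [lowCount, Nat.count_succ] at ih ⊢
    by_cases h : (a, y) ∈ C
    · rw [vPipe_succ_of_mem (by omega) hy h, hPipe_succ_of_mem h]
      omega
    · rw [vPipe_succ_of_notMem (by omega) hy h, hPipe_succ_of_notMem h]
      omega

lemma lowCount_mono_left {K a b y : ℕ} (hab : a ≤ b) :
    lowCount m n C K a y ≤ lowCount m n C K b y :=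
  Nat.count_monotone _ hab

lemma lowCount_mono_right {K a y z : ℕ} (hK : n + 1 ≤ K + y) (hyz : y ≤ z) (hz : z ≤ n + 1)
    (ha : a ≤ m + 1) : lowCount m n C K a y ≤ lowCount m n C K a z := by
  induction z, hyz using Nat.le_induction with
  | base => rfl
  | succ z hyz ih =>
    have row := lowCount_succ_add (C := C) (K := K) (by omega) (show z ≤ n by omega) ha
    have prev := ih (by omega)
    split_ifs at row <;> omega

lemma lowCount_lt_of_notMem {K x y : ℕ} (hK : n + 1 ≤ K + y) (hx : x ≤ m) (hy : y ≤ n)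
    (h : (x, y) ∉ C) : lowCount m n C K x y < lowCount m n C K (x + 1) (y + 1) := by
  have row := lowCount_succ_add (C := C) hK hy (show x + 1 ≤ m + 1 by omega)
  have column : lowCount m n C K (x + 1) y =
    lowCount m n C K x y + if vPipe m n C x y ≤ K then 1 else 0 := Nat.count_succ _ _
  rw [hPipe_succ_of_notMem h] at row
  omega

lemma two_le_count_gridWord {x₁ y₁ x₂ y₂ : ℕ} (hx : x₁ < x₂) (hy : y₁ < y₂) (hx₂ : x₂ ≤ m)
    (hy₂ : y₂ ≤ n) (h₁ : (x₁, y₁) ∉ C) (h₂ : (x₂, y₂) ∉ C) :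
    2 ≤ Nat.count (fun x => gridWord m n C (n + 1) (x + 1) ≤ n + 1 - y₁) (x₂ + 1) := by
  simp only [← vPipe_top]
  let low := lowCount m n C (n + 1 - y₁)
  have first : low x₁ y₁ < low (x₁ + 1) (y₁ + 1) :=
    lowCount_lt_of_notMem (by omega) (by omega) (by omega) h₁
  have second : low x₂ y₂ < low (x₂ + 1) (y₂ + 1) :=
    lowCount_lt_of_notMem (by omega) hx₂ hy₂ h₂
  calc 2 ≤ low (x₁ + 1) (y₁ + 1) + 1 := by omega
    _ ≤ low (x₁ + 1) y₂ + 1 := by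
      gcongr; exact lowCount_mono_right (by omega) hy (by omega) (by omega)
    _ ≤ low x₂ y₂ + 1 := by gcongr; exact lowCount_mono_left hx
    _ ≤ low (x₂ + 1) (y₂ + 1) := second
    _ ≤ low (x₂ + 1) (n + 1) := lowCount_mono_right (by omega) (by omega) le_rfl (by omega)

end LowCount

section Reduced

variable {m n : ℕ} {C : Set (ℕ × ℕ)}

lemma encard_inversions_gridWord_mul_rowWord {y : ℕ}
    (hC : ∀ x ≤ m, (x, y) ∈ C → hPipe m n C x y < vPipe m n C x y) {k : ℕ} (hk : k ≤ m + 1) :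
    (inversions (gridWord m n C y * rowWord n C y k)).encard =
      (inversions (gridWord m n C y)).encard + Nat.count (fun x => (x, y) ∈ C) k := by
  induction k with
  | zero => simp [rowWord_zero]
  | succ k ih =>
    rw [rowWord_succ, Nat.count_succ]
    by_cases h : (k, y) ∈ C
    · rw [if_pos h, if_pos h, ← mul_assoc,
        encard_inversions_mul_swap_succ (hC k (by omega) h), ih (by omega)]
      push_cast
      ring
    · rw [if_neg h, if_neg h, mul_one, add_zero, ih (by omega)]

lemma encard_inversions_gridWord {k : ℕ}
    (hC : ∀ x ≤ m, ∀ y < k, (x, y) ∈ C → hPipe m n C x y < vPipe m n C x y) :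
    (inversions (gridWord m n C k)).encard =
      ∑ y ∈ Finset.range k, Nat.count (fun x => (x, y) ∈ C) (m + 1) := by
  induction k with
  | zero => simp [gridWord_zero, inversions_one]
  | succ k ih =>
    rw [gridWord_succ, encard_inversions_gridWord_mul_rowWord (fun x hx => hC x hx k (by omega))
      le_rfl, ih fun x hx y hy => hC x hx y (by omega), Finset.sum_range_succ, Nat.cast_add]

end Reduced

section Toggle

variable {m n : ℕ} {C : Set (ℕ × ℕ)} {x y : ℕ}

lemma rowWord_insert_of_ne {z k : ℕ} (h : z ≠ y ∨ k ≤ x) :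
    rowWord n (insert (x, y) C) z k = rowWord n C z k := by
  refine congrArg List.prod (List.map_congr_left fun a ha => ?_)
  have : (a, z) ≠ (x, y) := by
    rw [List.mem_range] at ha
    rw [Ne, Prod.mk.injEq]
    omega
  simp only [Set.mem_insert_iff, this, false_or]

lemma gridWord_insert_of_le {k : ℕ} (h : k ≤ y) :
    gridWord m n (insert (x, y) C) k = gridWord m n C k :=
  congrArg List.prod <| List.map_congr_left fun _ hz =>
    rowWord_insert_of_ne (.inl ((List.mem_range.1 hz).trans_le h).ne)

lemma gridWord_mul_rowWord_insert (hC : (x, y) ∉ C) {k : ℕ} (hk : x < k) :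
    gridWord m n C y * rowWord n (insert (x, y) C) y k =
      Equiv.swap (hPipe m n C x y) (vPipe m n C x y) * (gridWord m n C y * rowWord n C y k) := by
  induction k, hk using Nat.le_induction with
  | base =>
    rw [rowWord_succ, rowWord_succ, if_pos (Set.mem_insert _ _), if_neg hC, mul_one,
      rowWord_insert_of_ne (.inr le_rfl), ← mul_assoc, Equiv.mul_swap_eq_swap_mul]
    rfl
  | succ k hk ih =>
    have : (k, y) ≠ (x, y) := by simpa using (Nat.ne_of_lt hk).symm
    simp only [rowWord_succ, Set.mem_insert_iff, this, false_or, ← mul_assoc]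
    rw [ih, mul_assoc _ (gridWord _ _ _ _)]

lemma gridWord_insert (hC : (x, y) ∉ C) (hx : x ≤ m) {k : ℕ} (hk : y < k) :
    gridWord m n (insert (x, y) C) k =
      Equiv.swap (hPipe m n C x y) (vPipe m n C x y) * gridWord m n C k := by
  induction k, hk using Nat.le_induction with
  | base =>
    rw [gridWord_succ, gridWord_succ, gridWord_insert_of_le le_rfl,
      gridWord_mul_rowWord_insert hC (Nat.lt_succ_of_le hx)]
  | succ k hk ih =>
    rw [gridWord_succ, gridWord_succ, ih, rowWord_insert_of_ne (.inl (Nat.ne_of_gt hk)), mul_assoc]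

end Toggle

section Rectangle

variable {m n : ℕ} {C : Set (ℕ × ℕ)}

lemma hPipe_eq_of_crossings {x₀ x₁ y : ℕ} (hx : x₀ ≤ x₁)
    (hC : ∀ a, x₀ ≤ a → a < x₁ → (a, y) ∈ C) : hPipe m n C x₁ y = hPipe m n C x₀ y := by
  induction x₁, hx using Nat.le_induction with
  | base => rfl
  | succ x₁ hx ih =>
    rw [hPipe_succ_of_mem (hC x₁ hx (by omega)), ih fun a h₀ h₁ => hC a h₀ (by omega)]

lemma vPipe_eq_of_crossings {x y₀ y₁ : ℕ} (hx : x ≤ m) (hy : y₀ ≤ y₁) (hy₁ : y₁ ≤ n + 1)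
    (hC : ∀ b, y₀ ≤ b → b < y₁ → (x, b) ∈ C) : vPipe m n C x y₁ = vPipe m n C x y₀ := by
  induction y₁, hy using Nat.le_induction with
  | base => rfl
  | succ y₁ hy ih =>
    rw [vPipe_succ_of_mem hx (by omega) (hC y₁ hy (by omega)),
      ih (by omega) fun b h₀ h₁ => hC b h₀ (by omega)]

variable {x₀ y₀ x₁ y₁ : ℕ}

lemma hPipe_eq_of_rectangle (hx : x₀ < x₁) (hy : y₀ < y₁) (hx₁ : x₁ ≤ m) (hy₁ : y₁ ≤ n)
    (h₀₀ : (x₀, y₀) ∉ C) (h₀₁ : (x₀, y₁) ∉ C)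
    (left : ∀ b, y₀ < b → b < y₁ → (x₀, b) ∈ C) (top : ∀ a, x₀ < a → a < x₁ → (a, y₁) ∈ C) :
    hPipe m n C x₁ y₁ = hPipe m n C x₀ y₀ := by
  rw [hPipe_eq_of_crossings hx top, hPipe_succ_of_notMem h₀₁,
    vPipe_eq_of_crossings (by omega) hy (by omega) left,
    vPipe_succ_of_notMem (by omega) (by omega) h₀₀]

lemma vPipe_eq_of_rectangle (hx : x₀ < x₁) (hy : y₀ < y₁) (hx₁ : x₁ ≤ m) (hy₁ : y₁ ≤ n)
    (h₀₀ : (x₀, y₀) ∉ C) (h₁₀ : (x₁, y₀) ∉ C)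
    (right : ∀ b, y₀ < b → b < y₁ → (x₁, b) ∈ C) (bottom : ∀ a, x₀ < a → a < x₁ → (a, y₀) ∈ C) :
    vPipe m n C x₁ y₁ = vPipe m n C x₀ y₀ := by
  rw [vPipe_eq_of_crossings hx₁ hy (by omega) right, vPipe_succ_of_notMem hx₁ (by omega) h₁₀,
    hPipe_eq_of_crossings hx bottom, hPipe_succ_of_notMem h₀₀]

end Rectangle

section Heights

lemma heightAt_zero (ν : List Bool) : heightAt ν 0 = 0 := by
  cases ν <;> rfl

lemma heightAt_monotone (ν : List Bool) : Monotone (heightAt ν) := by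
  refine monotone_nat_of_le_succ fun x => ?_
  induction ν generalizing x with
  | nil => cases x <;> rfl
  | cons b ν ih =>
    cases x with
    | zero => rw [heightAt_zero]; exact Nat.zero_le _
    | succ x =>
      cases b with
      | true => exact Nat.succ_le_succ (ih _)
      | false => exact ih _

lemma heightAt_le_northSteps (ν : List Bool) (x : ℕ) : heightAt ν x ≤ northSteps ν := by
  induction ν generalizing x with
  | nil => cases x <;> rfl
  | cons b ν ih =>
    cases x with
    | zero => rw [heightAt_zero]; exact Nat.zero_le _
    | succ x =>
      cases b with
      | true => simpa [heightAt, northSteps] using ih (x + 1)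
      | false => simpa [heightAt, northSteps] using ih x

lemma heightAt_of_eastSteps_lt {ν : List Bool} {x : ℕ} (h : eastSteps ν < x) :
    heightAt ν x = northSteps ν := by
  induction ν generalizing x with
  | nil => cases x <;> rfl
  | cons b ν ih =>
    cases x with
    | zero => omega
    | succ x =>
      cases b with
      | true => simpa [heightAt, northSteps] using ih (by simpa [eastSteps] using h)
      | false => simpa [heightAt, northSteps] using ih (by simpa [eastSteps] using h)

lemma pointAt_succ_of_east {ν : List Bool} {i : ℕ} (h : ν.getD i true = false) :
    pointAt ν (i + 1) = ((pointAt ν i).1 + 1, (pointAt ν i).2) := by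
  have east : ν[i]? = some false := by
    rw [List.getD_eq_getElem?_getD] at h
    cases hi : ν[i]? <;> simp_all
  simp [pointAt, List.take_add_one, east]

lemma heightAt_pointAt_succ {ν : List Bool} {i : ℕ} (h : ν.getD i true = false) :
    heightAt ν ((pointAt ν i).1 + 1) = (pointAt ν i).2 := by
  induction ν generalizing i with
  | nil => simp at h
  | cons b ν ih =>
    cases i with
    | zero => cases b <;> simp_all [pointAt, heightAt, heightAt_zero]
    | succ i => cases b <;> simpa [pointAt, heightAt] using ih h

lemma exists_pointAt_fst_eq {ν : List Bool} {x : ℕ} (hx : x < eastSteps ν) :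
    ∃ i < ν.length, ν.getD i true = false ∧ (pointAt ν i).1 = x := by
  induction ν generalizing x with
  | nil => simp [eastSteps] at hx
  | cons b ν ih =>
    rw [List.length_cons, Nat.exists_lt_succ_left]
    cases b with
    | true => simpa [pointAt] using ih (by simpa [eastSteps] using hx)
    | false =>
      cases x with
      | zero => simp [pointAt]
      | succ x => simpa [pointAt] using ih (by simpa [eastSteps] using hx)

lemma mem_TminSet_iff {ν : List Bool} {x y : ℕ} :
    (x, y) ∈ TminSet ν ↔ (x, y) ∈ APts ν ∧ (x = 0 ∨ y = heightAt ν x) := by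
  refine and_congr_right fun hA => or_congr_right' fun hx => ⟨?_, fun hy => ?_⟩
  · rintro ⟨i, -, east, hp⟩
    rw [pointAt_succ_of_east east, Prod.mk.injEq] at hp
    rw [hp.1, hp.2, heightAt_pointAt_succ east]
  · obtain ⟨x, rfl⟩ := Nat.exists_eq_add_one_of_ne_zero hx
    obtain ⟨i, hi, east, rfl⟩ := exists_pointAt_fst_eq hA.1
    exact ⟨i, hi, east, by rw [pointAt_succ_of_east east, hy, heightAt_pointAt_succ east]⟩

end Heights

/-- Every column `z` to the right of `x` that reaches down to row `y` has `f z ≤ y`: when `f` gives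
the highest points of a set, no point of the set is incompatible with `(x, y)` from above. -/
def ClearRight (ν : List Bool) (f : ℕ → ℕ) (x y : ℕ) : Prop :=
  ∀ z, x < z → heightAt ν z ≤ y → f z ≤ y

/-- The function sending a column to the height of its highest point in a `ν`-tree. This encodes
the bracket vector of the tree; the columns beyond the end of `ν` get the value `northSteps ν`,
which is forced by `heightAt_of_eastSteps_lt`. -/
@[ext]
structure TopFunction (ν : List Bool) where
  toFun : ℕ → ℕ
  map_zero : toFun 0 = northSteps ν
  heightAt_le : ∀ x, heightAt ν x ≤ toFun x
  le_northSteps : ∀ x, toFun x ≤ northSteps ν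
  clearRight : ∀ x, ClearRight ν toFun x (toFun x)

namespace TopFunction

variable {ν : List Bool}

instance : CoeFun (TopFunction ν) fun _ => ℕ → ℕ := ⟨toFun⟩

lemma eq_northSteps (φ : TopFunction ν) {x : ℕ} (hx : eastSteps ν < x) : φ x = northSteps ν :=
  (φ.le_northSteps x).antisymm (heightAt_of_eastSteps_lt hx ▸ φ.heightAt_le x)

section Lattice

instance : PartialOrder (TopFunction ν) := PartialOrder.lift toFun fun _ _ => TopFunction.ext

instance : Finite (TopFunction ν) := by
  refine Finite.of_injective
    (fun φ (x : Fin (eastSteps ν + 1)) => (⟨φ x, Nat.lt_succ_of_le (φ.le_northSteps x)⟩ :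
      Fin (northSteps ν + 1))) fun φ ψ h => TopFunction.ext (funext fun x => ?_)
  rcases Nat.lt_or_ge (eastSteps ν) x with hx | hx
  · rw [φ.eq_northSteps hx, ψ.eq_northSteps hx]
  · exact congrArg Fin.val (congrFun h ⟨x, Nat.lt_succ_of_le hx⟩)

instance instBoundedOrder : BoundedOrder (TopFunction ν) where
  top :=
    { toFun := fun _ => northSteps ν
      map_zero := rfl
      heightAt_le := heightAt_le_northSteps ν
      le_northSteps := fun _ => le_rfl
      clearRight := fun _ _ _ _ => le_rfl }
  bot :=
    { toFun := fun x => if x = 0 then northSteps ν else heightAt ν x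
      map_zero := rfl
      heightAt_le := fun x => by split_ifs <;> simp [heightAt_le_northSteps]
      le_northSteps := fun x => by split_ifs <;> simp [heightAt_le_northSteps]
      clearRight := fun _ _ hx hz => (if_neg (Nat.ne_zero_of_lt hx)).trans_le hz }
  le_top φ := φ.le_northSteps
  bot_le φ x := by
    rcases x.eq_zero_or_pos with rfl | hx
    · exact φ.map_zero.ge
    · exact (if_neg hx.ne').trans_le (φ.heightAt_le x)

/-- The pointwise infimum over `insert ⊤ S`, which is nonempty. -/
noncomputable def infFun (S : Set (TopFunction ν)) (x : ℕ) : ℕ :=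
  sInf ((fun φ : TopFunction ν => φ x) '' insert ⊤ S)

lemma infFun_le {S : Set (TopFunction ν)} {φ : TopFunction ν} (h : φ ∈ insert ⊤ S) (x : ℕ) :
    infFun S x ≤ φ x :=
  Nat.sInf_le (Set.mem_image_of_mem _ h)

lemma exists_eq_infFun (S : Set (TopFunction ν)) (x : ℕ) :
    ∃ φ ∈ insert ⊤ S, φ.toFun x = infFun S x :=
  Nat.sInf_mem ((Set.insert_nonempty ⊤ S).image _)

noncomputable instance : InfSet (TopFunction ν) where
  sInf S :=
    { toFun := infFun S
      map_zero := by
        obtain ⟨φ, -, h⟩ := exists_eq_infFun S 0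
        rw [← h, φ.map_zero]
      heightAt_le := fun x => by
        obtain ⟨φ, -, h⟩ := exists_eq_infFun S x
        exact h ▸ φ.heightAt_le x
      le_northSteps := infFun_le (Set.mem_insert _ _)
      clearRight := fun x z hx hz => by
        obtain ⟨φ, hφ, h⟩ := exists_eq_infFun S x
        rw [← h] at hz ⊢
        exact (infFun_le hφ z).trans (φ.clearRight x z hx hz) }

lemma isGLB_sInf (S : Set (TopFunction ν)) : IsGLB S (sInf S) := by
  refine ⟨fun φ hφ x => infFun_le (Set.mem_insert_of_mem _ hφ) x, fun ψ hψ x => ?_⟩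
  obtain ⟨φ, rfl | hφ, h⟩ := exists_eq_infFun S x
  · exact (ψ.le_northSteps x).trans_eq h
  · exact (hψ hφ x).trans_eq h

noncomputable instance : CompleteLattice (TopFunction ν) where
  __ := instBoundedOrder (ν := ν)
  __ := completeLatticeOfInf _ isGLB_sInf

lemma bot_apply (x : ℕ) :
    (⊥ : TopFunction ν) x = if x = 0 then northSteps ν else heightAt ν x := rfl

end Lattice

section Tree

variable {φ ψ : TopFunction ν} {x y : ℕ}

/-- The `ν`-tree whose highest points are given by `φ`. -/
noncomputable def tree (φ : TopFunction ν) : Finset (ℕ × ℕ) :=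
  (Finset.range (eastSteps ν + 1) ×ˢ Finset.range (northSteps ν + 1)).filter fun p =>
    p ∈ APts ν ∧ p.2 ≤ φ p.1 ∧ ClearRight ν φ p.1 p.2

lemma mem_tree : (x, y) ∈ φ.tree ↔ (x, y) ∈ APts ν ∧ y ≤ φ x ∧ ClearRight ν φ x y := by
  simp only [tree, Finset.mem_filter, Finset.mem_product, Finset.mem_range, and_iff_right_iff_imp]
  exact fun h => ⟨Nat.lt_succ_of_le h.1.1, Nat.lt_succ_of_le h.1.2.2⟩

lemma tree_subset_APts (φ : TopFunction ν) : (φ.tree : Set (ℕ × ℕ)) ⊆ APts ν :=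
  fun _ hp => (mem_tree.1 hp).1

lemma top_mem_tree (φ : TopFunction ν) (hx : x ≤ eastSteps ν) : (x, φ x) ∈ φ.tree :=
  mem_tree.2 ⟨⟨hx, φ.heightAt_le x, φ.le_northSteps x⟩, le_rfl, φ.clearRight x⟩

lemma coe_tree_bot : ((⊥ : TopFunction ν).tree : Set (ℕ × ℕ)) = TminSet ν := by
  ext ⟨x, y⟩
  rw [Finset.mem_coe, mem_tree, mem_TminSet_iff]
  refine and_congr_right fun hA => ?_
  have clear : ClearRight ν (⊥ : TopFunction ν) x y := fun z hz h => by
    rwa [bot_apply, if_neg (by omega)]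
  rw [and_iff_left clear, bot_apply]
  split_ifs with h
  · exact iff_of_true hA.2.2 (.inl h)
  · exact ⟨fun hy => .inr (hy.antisymm hA.2.1), fun hy => (hy.resolve_left h).le⟩

lemma le_eastSteps_of_lt (hx : φ x < ψ x) : x ≤ eastSteps ν := by
  by_contra! h
  rw [φ.eq_northSteps h, ψ.eq_northSteps h] at hx
  exact lt_irrefl _ hx

lemma le_of_tree_subset (h : φ.tree ⊆ ψ.tree) : φ ≤ ψ := by
  intro x
  by_contra! hx
  exact hx.not_ge (mem_tree.1 (h (φ.top_mem_tree (le_eastSteps_of_lt hx)))).2.1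

lemma exists_mem_tree_lt (φ : TopFunction ν) (hy : y < northSteps ν) :
    ∃ x, (x, y) ∈ φ.tree ∧ y < φ x := by
  let P : ℕ → Prop := fun x => heightAt ν x ≤ y ∧ y < φ x
  have hP0 : P 0 := ⟨by simp [heightAt_zero], by rwa [φ.map_zero]⟩
  have hP : P (Nat.findGreatest P (eastSteps ν)) := Nat.findGreatest_spec (Nat.zero_le _) hP0
  refine ⟨_, mem_tree.2 ⟨⟨Nat.findGreatest_le _, hP.1, hy.le⟩, hP.2.le, fun z hz h => ?_⟩, hP.2⟩
  by_contra! hlt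
  have hzm : z ≤ eastSteps ν := by
    by_contra! hm
    rw [heightAt_of_eastSteps_lt hm] at h
    omega
  exact Nat.findGreatest_is_greatest hz hzm ⟨h, hlt⟩

lemma eq_of_mem_tree_of_lt {x' : ℕ} (h : (x, y) ∈ φ.tree) (hy : y < φ x)
    (h' : (x', y) ∈ φ.tree) (hy' : y < φ x') : x = x' := by
  wlog hlt : x < x' generalizing x x'
  · rcases (not_lt.1 hlt).eq_or_lt with rfl | hgt
    · rfl
    · exact (this h' hy' h hy hgt).symm
  exact absurd ((mem_tree.1 h).2.2 x' hlt (mem_tree.1 h').1.2.1) hy'.not_ge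

/-- Below the top row every row has exactly one point that is not the highest in its column. -/
lemma card_tree (φ : TopFunction ν) : φ.tree.card = eastSteps ν + northSteps ν + 1 := by
  have lower : (φ.tree.filter fun p => p.2 < φ p.1).card = (Finset.range (northSteps ν)).card := by
    refine Finset.card_nbij Prod.snd ?_ ?_ ?_
    · intro p hp
      exact Finset.mem_range.2 ((Finset.mem_filter.1 hp).2.trans_le (φ.le_northSteps _))
    · rintro ⟨x, y⟩ hp ⟨x', y'⟩ hp' (rfl : y = y')
      simp only [Finset.coe_filter, Set.mem_ofPred_eq] at hp hp'
      rw [eq_of_mem_tree_of_lt hp.1 hp.2 hp'.1 hp'.2]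
    · intro y hy
      obtain ⟨x, hx, hlt⟩ := φ.exists_mem_tree_lt (Finset.mem_range.1 hy)
      exact ⟨(x, y), Finset.mem_coe.2 (Finset.mem_filter.2 ⟨hx, hlt⟩), rfl⟩
  have highest : (φ.tree.filter fun p => ¬p.2 < φ p.1).card =
      (Finset.range (eastSteps ν + 1)).card := by
    refine Finset.card_nbij Prod.fst ?_ ?_ ?_
    · intro p hp
      exact Finset.mem_range.2 (Nat.lt_succ_of_le (mem_tree.1 (Finset.mem_filter.1 hp).1).1.1)
    · rintro ⟨x, y⟩ hp ⟨x', y'⟩ hp' (rfl : x = x')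
      simp only [Finset.coe_filter, Set.mem_ofPred_eq, mem_tree] at hp hp'
      rw [Prod.mk.injEq]
      omega
    · intro x hx
      have top := φ.top_mem_tree (Nat.le_of_lt_succ (Finset.mem_range.1 hx))
      exact ⟨(x, φ x), Finset.mem_coe.2 (Finset.mem_filter.2 ⟨top, lt_irrefl _⟩), rfl⟩
  rw [← Finset.card_filter_add_card_filter_not (s := φ.tree) fun p => p.2 < φ p.1, lower, highest,
    Finset.card_range, Finset.card_range]
  omega

lemma le_of_tree_erase_eq {p q : ℕ × ℕ} (hpq : p.2 ≤ q.2) (h : φ.tree.erase p = ψ.tree.erase q) :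
    φ ≤ ψ := by
  intro x
  by_contra! hlt
  have hx : x ≤ eastSteps ν := le_eastSteps_of_lt hlt
  have hp : p = (x, φ x) := by
    by_contra hne
    have : (x, φ x) ∈ ψ.tree.erase q :=
      h ▸ Finset.mem_erase.2 ⟨Ne.symm hne, φ.top_mem_tree hx⟩
    exact hlt.not_ge (mem_tree.1 (Finset.mem_of_mem_erase this)).2.1
  subst hp
  obtain ⟨z, hz, hzlt⟩ := ψ.exists_mem_tree_lt (hlt.trans_le (φ.le_northSteps x))
  have hzx : z < x := by
    by_contra! hxz
    rcases hxz.eq_or_lt with rfl | hxz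
    · exact lt_irrefl _ hzlt
    · exact hzlt.not_ge (ψ.clearRight x z hxz (mem_tree.1 hz).1.2.1)
  have hzφ : (z, ψ x) ∈ φ.tree.erase (x, φ x) := by
    rw [h, Finset.mem_erase]
    refine ⟨?_, hz⟩
    rintro rfl
    exact hlt.not_ge hpq
  exact hlt.not_ge ((mem_tree.1 (Finset.mem_of_mem_erase hzφ)).2.2 x hzx (ψ.heightAt_le x))

end Tree

end TopFunction

section Rotation

lemma gridWord_sdiff_eq_of_isRightRotationAt {ν : List Bool} {T T' : Set (ℕ × ℕ)} {q q' : ℕ × ℕ}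
    (h : IsRightRotationAt T T' q q') (hT : T ⊆ APts ν) (hq' : q' ∉ T) :
    gridWord (eastSteps ν) (northSteps ν) (APts ν \ T') (northSteps ν + 1) =
      gridWord (eastSteps ν) (northSteps ν) (APts ν \ T) (northSteps ν + 1) := by
  obtain ⟨x₀, y₀, x₁, y₁, rfl, rfl, hx, hy, h₀₀, h₀₁, h₁₀, left, bottom, top, right, rfl⟩ := h
  obtain ⟨-, hx₀, -⟩ := hT h₀₀
  obtain ⟨-, -, hy₁⟩ := hT h₀₁
  obtain ⟨hx₁, hx₁', -⟩ := hT h₁₀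
  dsimp only at hx₀ hy₁ hx₁ hx₁'
  have height_le {a : ℕ} (ha : a ≤ x₁) : heightAt ν a ≤ y₀ := (heightAt_monotone ν ha).trans hx₁'
  set C : Set (ℕ × ℕ) := APts ν \ insert (x₁, y₁) T
  have mem_C {a b : ℕ} (ha : a ≤ x₁) (hb : y₀ ≤ b) (hb' : b ≤ y₁) (hne : a ≠ x₁ ∨ b ≠ y₁)
      (hab : (a, b) ∉ T) : (a, b) ∈ C := by
    refine ⟨⟨ha.trans hx₁, (height_le ha).trans hb, hb'.trans hy₁⟩, ?_⟩
    rw [Set.mem_insert_iff, Prod.mk.injEq]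
    tauto
  have notMem_C {p : ℕ × ℕ} (hp : p ∈ T) : p ∉ C := fun h => h.2 (Set.mem_insert_of_mem _ hp)
  have before : APts ν \ T = insert (x₁, y₁) C := by
    have : (x₁, y₁) ∈ APts ν := ⟨hx₁, hx₁'.trans hy.le, hy₁⟩
    grind
  have after : APts ν \ (T \ {(x₀, y₀)} ∪ {(x₁, y₁)}) = insert (x₀, y₀) C := by
    have : (x₀, y₀) ∈ APts ν := hT h₀₀
    grind
  rw [before, after, gridWord_insert (notMem_C h₀₀) (by omega) (by omega),
    gridWord_insert (fun h => h.2 (Set.mem_insert _ _)) hx₁ (by omega),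
    hPipe_eq_of_rectangle hx hy hx₁ hy₁ (notMem_C h₀₀) (notMem_C h₀₁)
      (fun b h₀ h₁ => mem_C hx.le h₀.le h₁.le (.inl hx.ne) (left b h₀ h₁))
      (fun a h₀ h₁ => mem_C h₁.le hy.le le_rfl (.inl h₁.ne) (top a h₀ h₁)),
    vPipe_eq_of_rectangle hx hy hx₁ hy₁ (notMem_C h₀₀) (notMem_C h₁₀)
      (fun b h₀ h₁ => mem_C le_rfl h₀.le h₁.le (.inr h₁.ne) (right b h₀ h₁))
      (fun a h₀ h₁ => mem_C h₁.le le_rfl hy.le (.inl h₁.ne) (bottom a h₀ h₁))]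

end Rotation

namespace TopFunction

variable {ν : List Bool} {φ ψ : TopFunction ν} {x y : ℕ}

section Raise

lemma clearRight_update {f : ℕ → ℕ} (hxy : f x ≤ y) {a b : ℕ} :
    ClearRight ν (Function.update f x y) a b ↔
      ClearRight ν f a b ∧ (a < x → heightAt ν x ≤ b → y ≤ b) := by
  constructor
  · intro h
    refine ⟨fun z hz hzb => ?_, fun ha hb => ?_⟩
    · have := h z hz hzb
      rw [Function.update_apply] at this
      split_ifs at this with hzx
      · exact hzx ▸ hxy.trans this
      · exact this
    · simpa only [Function.update_self] using h x ha hb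
  · rintro ⟨h, hx⟩ z hz hzb
    rw [Function.update_apply]
    split_ifs with hzx
    · subst hzx
      exact hx hz hzb
    · exact h z hz hzb

/-- The height `y` is the least one to which the highest point of column `x` can be raised without
changing the other columns. -/
structure IsRaise (φ : TopFunction ν) (x y : ℕ) : Prop where
  le_northSteps : y ≤ northSteps ν
  lt : φ x < y
  clear : ClearRight ν φ x y
  minimal : ∀ b, φ x < b → b < y → ¬ClearRight ν φ x b
  left : ∀ a < x, heightAt ν x ≤ φ a → y ≤ φ a

lemma exists_isRaise (h : φ < ψ) : ∃ x y, IsRaise φ x y ∧ y ≤ ψ x := by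
  have hφψ : ∃ x, φ x < ψ x := by
    by_contra! hψφ
    exact h.not_ge hψφ
  obtain ⟨x, hx, minimal_x⟩ : ∃ x, φ x < ψ x ∧ ∀ a < x, ψ a ≤ φ a :=
    ⟨_, Nat.find_spec hφψ, fun a ha => not_lt.1 (Nat.find_min hφψ ha)⟩
  let P : ℕ → Prop := fun y => φ x < y ∧ ClearRight ν φ x y
  have hψ : P (ψ x) := ⟨hx, fun z hz h' => (h.le z).trans (ψ.clearRight x z hz h')⟩
  have hP : ∃ y, P y := ⟨_, hψ⟩
  have hyx : Nat.find hP ≤ ψ x := Nat.find_min' hP hψ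
  refine ⟨x, Nat.find hP, ⟨hyx.trans (ψ.le_northSteps x), (Nat.find_spec hP).1,
    (Nat.find_spec hP).2, fun b hb hby hclear => Nat.find_min hP hby ⟨hb, hclear⟩,
    fun a ha hxa => ?_⟩, hyx⟩
  have hψa : ψ a = φ a := (minimal_x a ha).antisymm (h.le a)
  exact hyx.trans (hψa ▸ ψ.clearRight a x ha (hψa ▸ hxa))

namespace IsRaise

lemma le_eastSteps (h : IsRaise φ x y) : x ≤ eastSteps ν :=
  le_eastSteps_of_lt (ψ := ⊤) (h.lt.trans_le h.le_northSteps)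

lemma pos (h : IsRaise φ x y) : 0 < x := by
  by_contra! hx
  have top := h.lt.trans_le h.le_northSteps
  rw [Nat.le_zero.1 hx, φ.map_zero] at top
  exact lt_irrefl _ top

/-- The function with the highest point of column `x` raised to height `y`. -/
noncomputable def raise (h : IsRaise φ x y) : TopFunction ν where
  toFun := Function.update φ x y
  map_zero := by rw [Function.update_of_ne h.pos.ne, φ.map_zero]
  heightAt_le a := by
    rw [Function.update_apply]
    split_ifs with ha
    · exact ha ▸ (φ.heightAt_le x).trans h.lt.le
    · exact φ.heightAt_le a
  le_northSteps a := by
    rw [Function.update_apply]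
    split_ifs
    · exact h.le_northSteps
    · exact φ.le_northSteps a
  clearRight a := by
    rw [clearRight_update h.lt.le, Function.update_apply]
    split_ifs with ha
    · exact ⟨ha ▸ h.clear, fun hax => absurd ha hax.ne⟩
    · exact ⟨φ.clearRight a, h.left a⟩

lemma raise_apply (h : IsRaise φ x y) (a : ℕ) : h.raise a = if a = x then y else φ a :=
  Function.update_apply _ _ _ _

lemma lt_raise (h : IsRaise φ x y) : φ < h.raise := by
  have hx : φ x < h.raise x := by simpa only [h.raise_apply, if_true] using h.lt
  refine lt_of_le_not_ge (fun a => ?_) fun hge => hx.not_ge (hge x)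
  rw [h.raise_apply]
  split_ifs with ha
  · exact ha ▸ h.lt.le
  · exact le_rfl

lemma raise_le (h : IsRaise φ x y) (hle : φ ≤ ψ) (hy : y ≤ ψ x) : h.raise ≤ ψ := by
  intro a
  rw [h.raise_apply]
  split_ifs with ha
  · exact ha ▸ hy
  · exact hle a

lemma notMem_tree (h : IsRaise φ x y) {a b : ℕ} (ha : a ≤ x) (hb : φ x < b) (hby : b < y) :
    (a, b) ∉ φ.tree :=
  fun hab => h.minimal b hb hby fun z hz => (mem_tree.1 hab).2.2 z (ha.trans_lt hz)

lemma exists_pivot (h : IsRaise φ x y) : ∃ z < x, (z, φ x) ∈ φ.tree ∧ φ x < φ z := by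
  obtain ⟨z, hz, hlt⟩ := φ.exists_mem_tree_lt (h.lt.trans_le h.le_northSteps)
  refine ⟨z, ?_, hz, hlt⟩
  by_contra! hxz
  rcases hxz.eq_or_lt with rfl | hxz
  · exact lt_irrefl _ hlt
  · exact hlt.not_ge (φ.clearRight x z hxz (mem_tree.1 hz).1.2.1)

variable {z : ℕ}

lemma lt_of_between (h : IsRaise φ x y) (hz : (z, φ x) ∈ φ.tree) {a : ℕ} (hza : z < a)
    (hax : a < x) : φ a < φ x := by
  have := (mem_tree.1 hz).2.2 a hza ((heightAt_monotone ν hax.le).trans (φ.heightAt_le x))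
  refine this.lt_of_ne fun heq => h.lt.not_ge ?_
  exact heq ▸ h.left a hax (heq ▸ φ.heightAt_le x)

lemma mem_tree_raise_of_ne (h : IsRaise φ x y) (hz : (z, φ x) ∈ φ.tree) (hlt : φ x < φ z)
    {p : ℕ × ℕ} (hp : p ∈ φ.tree) (hpz : p ≠ (z, φ x)) : p ∈ h.raise.tree := by
  obtain ⟨a, b⟩ := p
  obtain ⟨hA, hb, clear⟩ := mem_tree.1 hp
  refine mem_tree.2 ⟨hA, hb.trans (h.lt_raise.le a), (clearRight_update h.lt.le).2 ⟨clear, ?_⟩⟩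
  intro hax hxb
  by_contra! hby
  have hbx : b = φ x := by
    refine (clear x hax hxb).eq_or_lt.elim Eq.symm fun hgt => ?_
    exact absurd hp (h.notMem_tree hax.le hgt hby)
  have hba : b < φ a := hby.trans_le (h.left a hax (hxb.trans hb))
  subst hbx
  exact hpz (by rw [eq_of_mem_tree_of_lt hp hba hz hlt])

lemma tree_raise (h : IsRaise φ x y) (hz : (z, φ x) ∈ φ.tree) (hlt : φ x < φ z) :
    h.raise.tree = insert (x, y) (φ.tree.erase (z, φ x)) := by
  have hxy : (x, y) ∉ φ.tree := fun hxy => h.lt.not_ge (mem_tree.1 hxy).2.1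
  symm
  refine Finset.eq_of_subset_of_card_le (Finset.insert_subset ?_ fun p hp => ?_) ?_
  · have := h.raise.top_mem_tree h.le_eastSteps
    rwa [h.raise_apply, if_pos rfl] at this
  · rw [Finset.mem_erase] at hp
    exact h.mem_tree_raise_of_ne hz hlt hp.2 hp.1
  · rw [Finset.card_insert_of_notMem (mt Finset.mem_of_mem_erase hxy),
      Finset.card_erase_add_one hz, card_tree, card_tree]

lemma isRightRotation (h : IsRaise φ x y) : IsRightRotation φ.tree h.raise.tree := by
  obtain ⟨z, hzx, hz, hlt⟩ := h.exists_pivot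
  have between {a : ℕ} (hza : z < a) (hax : a < x) {b : ℕ} (hb : φ x ≤ b) : (a, b) ∉ φ.tree :=
    fun hab => (h.lt_of_between hz hza hax).not_ge (hb.trans (mem_tree.1 hab).2.1)
  have corner : (z, y) ∈ φ.tree := by
    obtain ⟨⟨hzm, hzh, -⟩, -, -⟩ := mem_tree.1 hz
    have height_le : heightAt ν x ≤ φ z := (φ.heightAt_le x).trans hlt.le
    refine mem_tree.2 ⟨⟨hzm, hzh.trans h.lt.le, h.le_northSteps⟩, h.left z hzx height_le, ?_⟩
    intro a ha hay
    rcases lt_trichotomy a x with hax | rfl | hax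
    · exact ((h.lt_of_between hz ha hax).trans h.lt).le
    · exact h.lt.le
    · exact h.clear a hax hay
  refine ⟨(z, φ x), (x, y), z, φ x, x, y, rfl, rfl, hzx, h.lt, hz, corner,
    φ.top_mem_tree h.le_eastSteps, fun b => h.notMem_tree hzx.le,
    fun a ha ha' => between ha ha' le_rfl, fun a ha ha' => between ha ha' h.lt.le,
    fun b => h.notMem_tree le_rfl, ?_⟩
  rw [h.tree_raise hz hlt, Finset.coe_insert, Finset.coe_erase, Set.union_singleton]

end IsRaise

lemma reflTransGen_isRightRotation (h : φ ≤ ψ) :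
    Relation.ReflTransGen (fun φ ψ : TopFunction ν => IsRightRotation φ.tree ψ.tree) φ ψ := by
  induction φ using WellFoundedGT.induction with
  | ind φ ih =>
    rcases h.eq_or_lt with rfl | hlt
    · rfl
    · obtain ⟨x, y, hxy, hy⟩ := exists_isRaise hlt
      exact .head hxy.isRightRotation (ih _ hxy.lt_raise (hxy.raise_le h hy))

end Raise

lemma notMem_tree_of_isRightRotationAt {T : Set (ℕ × ℕ)} {q q' : ℕ × ℕ}
    (h : IsRightRotationAt φ.tree T q q') : q' ∉ φ.tree := by
  obtain ⟨x, y, x', y', -, rfl, hx, hy, hxy, -, hx'y, -⟩ := h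
  intro hx'y'
  have := (mem_tree.1 hxy).2.2 x' hx (mem_tree.1 hx'y).1.2.1
  exact hy.not_ge ((mem_tree.1 hx'y').2.1.trans this)

lemma gridWord_sdiff_tree (φ : TopFunction ν) :
    gridWord (eastSteps ν) (northSteps ν) (APts ν \ φ.tree) (northSteps ν + 1) =
      gridWord (eastSteps ν) (northSteps ν) (APts ν \ TminSet ν) (northSteps ν + 1) := by
  induction reflTransGen_isRightRotation (bot_le (a := φ)) with
  | refl => rw [coe_tree_bot]
  | tail _ h ih =>
    obtain ⟨q, q', h⟩ := h
    rw [← ih]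
    exact gridWord_sdiff_eq_of_isRightRotationAt h (tree_subset_APts _)
      (notMem_tree_of_isRightRotationAt h)

end TopFunction

section Compatible

variable {ν : List Bool} {T : Finset (ℕ × ℕ)} {x y : ℕ}

/-- The height of the highest point of `T` in column `x`, or `0` if there is none. -/
noncomputable def columnTop (T : Finset (ℕ × ℕ)) (x : ℕ) : ℕ :=
  (T.filter fun p => p.1 = x).sup Prod.snd

lemma columnTop_le_iff {b : ℕ} : columnTop T x ≤ b ↔ ∀ y, (x, y) ∈ T → y ≤ b := by
  simp only [columnTop, Finset.sup_le_iff, Finset.mem_filter, and_imp, Prod.forall]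
  exact ⟨fun h y hy => h x y hy rfl, fun h _ y hy hx => h y (hx ▸ hy)⟩

lemma le_columnTop (h : (x, y) ∈ T) : y ≤ columnTop T x :=
  columnTop_le_iff.1 le_rfl y h

lemma columnTop_mem (h : (x, y) ∈ T) : (x, columnTop T x) ∈ T := by
  obtain ⟨⟨x', y'⟩, hp, heq⟩ := Finset.exists_mem_eq_sup (T.filter fun p => p.1 = x)
    ⟨(x, y), Finset.mem_filter.2 ⟨h, rfl⟩⟩ Prod.snd
  obtain ⟨hp, hx : x' = x⟩ := Finset.mem_filter.1 hp
  rwa [columnTop, heq, ← hx]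

lemma columnTop_le_of_compatible (hT : (T : Set (ℕ × ℕ)) ⊆ APts ν)
    (hc : (T : Set (ℕ × ℕ)).Pairwise (Compatible ν)) (h : (x, y) ∈ T) {z : ℕ} (hxz : x < z)
    (hz : heightAt ν z ≤ y) : columnTop T z ≤ y := by
  refine columnTop_le_iff.2 fun b hb => ?_
  by_contra! hyb
  have hne : (x, y) ≠ (z, b) := fun heq => hxz.ne (congrArg Prod.fst heq)
  exact hc h hb hne (.inl ⟨hxz, hyb, (hT hb).1, hz, (hT h).2.2⟩)

lemma card_filter_lt_columnTop_le (hT : (T : Set (ℕ × ℕ)) ⊆ APts ν)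
    (hc : (T : Set (ℕ × ℕ)).Pairwise (Compatible ν)) :
    (T.filter fun p => p.2 < columnTop T p.1).card ≤ northSteps ν := by
  rw [← Finset.card_range (northSteps ν)]
  refine Finset.card_le_card_of_injOn Prod.snd (fun p hp => ?_) ?_
  · obtain ⟨hp, hlt⟩ := Finset.mem_filter.1 hp
    exact Finset.mem_coe.2 (Finset.mem_range.2 (hlt.trans_le (hT (columnTop_mem hp)).2.2))
  · rintro ⟨x, y⟩ hp ⟨x', y'⟩ hp' (rfl : y = y')
    wlog hlt : x < x' generalizing x x'
    · rcases (not_lt.1 hlt).eq_or_lt with rfl | hgt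
      · rfl
      · exact (this x' hp' x hp hgt).symm
    obtain ⟨hp, -⟩ := Finset.mem_filter.1 hp
    obtain ⟨hp', hlt'⟩ := Finset.mem_filter.1 hp'
    exact absurd (columnTop_le_of_compatible hT hc hp hlt (hT hp').2.1) hlt'.not_ge

lemma card_filter_not_lt_columnTop_le :
    (T.filter fun p => ¬p.2 < columnTop T p.1).card ≤ (T.image Prod.fst).card := by
  refine Finset.card_le_card_of_injOn Prod.fst (fun p hp => ?_) ?_
  · exact Finset.mem_coe.2 (Finset.mem_image_of_mem _ (Finset.mem_filter.1 hp).1)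
  · rintro ⟨x, y⟩ hp ⟨x', y'⟩ hp' (rfl : x = x')
    obtain ⟨hp, hge⟩ := Finset.mem_filter.1 hp
    obtain ⟨hp', hge'⟩ := Finset.mem_filter.1 hp'
    have hy : y = columnTop T x := (le_columnTop hp).antisymm (not_lt.1 hge)
    have hy' : y' = columnTop T x := (le_columnTop hp').antisymm (not_lt.1 hge')
    rw [hy, hy']

lemma exists_mem_of_card_eq (hT : (T : Set (ℕ × ℕ)) ⊆ APts ν)
    (hc : (T : Set (ℕ × ℕ)).Pairwise (Compatible ν))
    (hcard : T.card = eastSteps ν + northSteps ν + 1) (hx : x ≤ eastSteps ν) :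
    ∃ y, (x, y) ∈ T := by
  have hsub : T.image Prod.fst ⊆ Finset.range (eastSteps ν + 1) :=
    Finset.image_subset_iff.2 fun p hp => Finset.mem_range.2 (Nat.lt_succ_of_le (hT hp).1)
  have heq : T.image Prod.fst = Finset.range (eastSteps ν + 1) := by
    refine Finset.eq_of_subset_of_card_le hsub ?_
    have split := Finset.card_filter_add_card_filter_not (s := T) fun p => p.2 < columnTop T p.1
    have lower := card_filter_lt_columnTop_le hT hc
    have highest := card_filter_not_lt_columnTop_le (T := T)
    rw [Finset.card_range]
    omega
  have hmem : x ∈ T.image Prod.fst := heq ▸ Finset.mem_range.2 (Nat.lt_succ_of_le hx)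
  obtain ⟨⟨_, y⟩, hy, rfl⟩ := Finset.mem_image.1 hmem
  exact ⟨y, hy⟩

/-- The height of the highest point of `T` in the columns `1, …, eastSteps ν`, and `northSteps ν`
in all others: this is the top function of `T` if `T` is a `ν`-tree. -/
noncomputable def topHeight (ν : List Bool) (T : Finset (ℕ × ℕ)) (x : ℕ) : ℕ :=
  if 0 < x ∧ x ≤ eastSteps ν then columnTop T x else northSteps ν

lemma topHeight_le (hT : (T : Set (ℕ × ℕ)) ⊆ APts ν) (x : ℕ) :
    topHeight ν T x ≤ northSteps ν := by
  rw [topHeight]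
  split_ifs
  · exact columnTop_le_iff.2 fun y hy => (hT hy).2.2
  · exact le_rfl

lemma le_topHeight (hT : (T : Set (ℕ × ℕ)) ⊆ APts ν) (h : (x, y) ∈ T) : y ≤ topHeight ν T x := by
  rw [topHeight]
  split_ifs
  · exact le_columnTop h
  · exact (hT h).2.2

lemma clearRight_topHeight (hT : (T : Set (ℕ × ℕ)) ⊆ APts ν)
    (hc : (T : Set (ℕ × ℕ)).Pairwise (Compatible ν)) (h : (x, y) ∈ T) :
    ClearRight ν (topHeight ν T) x y := by
  intro z hxz hz
  rw [topHeight]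
  split_ifs
  · exact columnTop_le_of_compatible hT hc h hxz hz
  · rwa [heightAt_of_eastSteps_lt (by omega)] at hz

/-- The top function of a set of pairwise compatible points that meets every column. -/
noncomputable def topFunctionOfCompatible (hT : (T : Set (ℕ × ℕ)) ⊆ APts ν)
    (hc : (T : Set (ℕ × ℕ)).Pairwise (Compatible ν))
    (hcol : ∀ x ≤ eastSteps ν, ∃ y, (x, y) ∈ T) : TopFunction ν where
  toFun := topHeight ν T
  map_zero := if_neg fun h => h.1.false
  heightAt_le x := by
    rcases Nat.lt_or_ge (eastSteps ν) x with hx | hx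
    · rw [topHeight, if_neg (by omega)]
      exact heightAt_le_northSteps ν x
    · obtain ⟨y, hy⟩ := hcol x hx
      exact (hT hy).2.1.trans (le_topHeight hT hy)
  le_northSteps := topHeight_le hT
  clearRight x := by
    by_cases hx : 0 < x ∧ x ≤ eastSteps ν
    · obtain ⟨y, hy⟩ := hcol x hx.2
      rw [topHeight, if_pos hx]
      exact clearRight_topHeight hT hc (columnTop_mem hy)
    · rw [topHeight, if_neg hx]
      exact fun z _ _ => topHeight_le hT z

lemma exists_tree_eq (hT : (T : Set (ℕ × ℕ)) ⊆ APts ν)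
    (hc : (T : Set (ℕ × ℕ)).Pairwise (Compatible ν))
    (hcard : T.card = eastSteps ν + northSteps ν + 1) :
    ∃ φ : TopFunction ν, φ.tree = T := by
  refine ⟨topFunctionOfCompatible hT hc fun x => exists_mem_of_card_eq hT hc hcard, ?_⟩
  symm
  refine Finset.eq_of_subset_of_card_le (fun ⟨x, y⟩ h => ?_) (by rw [hcard, TopFunction.card_tree])
  exact TopFunction.mem_tree.2 ⟨hT h, le_topHeight hT h, clearRight_topHeight hT hc h⟩

end Compatible

section Dominant

variable {m n : ℕ} {h : ℕ → ℕ} {x y : ℕ}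

/-- The cells of the columns `1, …, m` strictly above the heights `h`. For `h = heightAt ν` they
are the crossings of the pipe dream whose elbows form the minimal `ν`-tree. -/
def dominantCrossings (m n : ℕ) (h : ℕ → ℕ) : Set (ℕ × ℕ) :=
  {p | 0 < p.1 ∧ p.1 ≤ m ∧ h p.1 < p.2 ∧ p.2 ≤ n}

lemma hPipe_dominantCrossings_one (hy : y ≤ n) :
    hPipe m n (dominantCrossings m n h) 1 y = n + 2 - y := by
  have elbow (b : ℕ) : (0, b) ∉ dominantCrossings m n h := fun h => h.1.false
  rw [← Nat.zero_add 1, hPipe_succ_of_notMem (elbow y)]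
  cases y with
  | zero => rw [vPipe_zero]; omega
  | succ y =>
    rw [vPipe_succ_of_notMem (Nat.zero_le m) (by omega) (elbow y), hPipe_zero (by omega)]
    omega

lemma hPipe_dominantCrossings_of_lt (hh : Monotone h) (hx : x ≤ m) (hy : y ≤ n) (hxy : h x < y) :
    hPipe m n (dominantCrossings m n h) (x + 1) y = n + 2 - y := by
  rw [hPipe_eq_of_crossings (x₀ := 1) (by omega) fun a ha hax => ?_, hPipe_dominantCrossings_one hy]
  exact ⟨ha, by omega, (hh (Nat.le_of_lt_succ hax)).trans_lt hxy, hy⟩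

lemma le_vPipe_dominantCrossings_add (hh : Monotone h) (hx : 0 < x) (hxm : x ≤ m)
    (hy : y ≤ n + 1) :
    n + 2 ≤ vPipe m n (dominantCrossings m n h) x y + min (h x) (y - 1) := by
  induction y generalizing x with
  | zero => rw [vPipe_zero]; omega
  | succ y ih =>
    by_cases hxy : h x < y
    · have hC : (x, y) ∈ dominantCrossings m n h := ⟨hx, hxm, hxy, by omega⟩
      rw [vPipe_succ_of_mem hxm (by omega) hC]
      have := ih hx hxm (by omega)
      omega
    · rw [vPipe_succ_of_notMem hxm (by omega) fun hC => hxy hC.2.2.1]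
      suffices n + 2 ≤ hPipe m n (dominantCrossings m n h) x y + y by omega
      obtain ⟨z, rfl⟩ := Nat.exists_eq_add_one_of_ne_zero hx.ne'
      rcases z.eq_zero_or_pos with rfl | hz
      · rw [Nat.zero_add, hPipe_dominantCrossings_one (by omega)]
        omega
      by_cases hzy : h z < y
      · rw [hPipe_dominantCrossings_of_lt hh (by omega) (by omega) hzy]
        omega
      · rw [hPipe_succ_of_notMem fun hC => hzy hC.2.2.1]
        have := ih hz (by omega) (by omega)
        omega

lemma hPipe_lt_vPipe_dominantCrossings (hh : Monotone h)
    (hC : (x, y) ∈ dominantCrossings m n h) :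
    hPipe m n (dominantCrossings m n h) x y < vPipe m n (dominantCrossings m n h) x y := by
  have ⟨(hx : 0 < x), (hxm : x ≤ m), (hxy : h x < y), (hy : y ≤ n)⟩ := hC
  have := le_vPipe_dominantCrossings_add (n := n) (y := y) hh hx hxm (by omega)
  rw [← hPipe_succ_of_mem hC, hPipe_dominantCrossings_of_lt hh hxm hy hxy]
  omega

lemma count_gridWord_dominantCrossings_le_one (hh : Monotone h) (hx : x ≤ m)
    (hxy : h x ≤ y) :
    Nat.count (fun a => gridWord m n (dominantCrossings m n h) (n + 1) (a + 1) ≤ n + 1 - y)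
      (x + 1) ≤ 1 := by
  have none_of_pos (a : ℕ) (ha : a < x) :
      n + 1 - y < gridWord m n (dominantCrossings m n h) (n + 1) (a + 1 + 1) := by
    have := le_vPipe_dominantCrossings_add (n := n) (x := a + 1) hh a.succ_pos
      (ha.trans_le hx) le_rfl
    have : h (a + 1) ≤ h x := hh ha
    rw [← vPipe_top]
    omega
  rw [Nat.count_succ', Nat.count_iff_forall_not.2 fun a ha => (none_of_pos a ha).not_ge]
  split_ifs <;> simp only [zero_add, le_refl, zero_le]

end Dominant

section MinimalTree

variable {ν : List Bool}

lemma APts_sdiff_TminSet :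
    APts ν \ TminSet ν = dominantCrossings (eastSteps ν) (northSteps ν) (heightAt ν) := by
  ext ⟨x, y⟩
  simp only [Set.mem_sdiff, mem_TminSet_iff, APts, dominantCrossings, Set.mem_ofPred_eq]
  omega

lemma pairwise_compatible_of_gridWord_eq {T : Set (ℕ × ℕ)}
    (hw : gridWord (eastSteps ν) (northSteps ν) (APts ν \ T) (northSteps ν + 1) =
      gridWord (eastSteps ν) (northSteps ν) (APts ν \ TminSet ν) (northSteps ν + 1))
    (hT : T ⊆ APts ν) : T.Pairwise (Compatible ν) := by
  have not_crossing {p : ℕ × ℕ} (hp : p ∈ T) : p ∉ APts ν \ T := fun h => h.2 hp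
  have absurd_of_corner {p q : ℕ × ℕ} (hp : p ∈ T) (hq : q ∈ T) (hx : p.1 < q.1) (hy : p.2 < q.2)
      (hc : (q.1, p.2) ∈ APts ν) : False := by
    have two_le := two_le_count_gridWord hx hy hc.1 (hT hq).2.2 (not_crossing hp) (not_crossing hq)
    rw [hw, APts_sdiff_TminSet] at two_le
    exact absurd (two_le.trans
      (count_gridWord_dominantCrossings_le_one (heightAt_monotone ν) hc.1 hc.2.1)) (by decide)
  rintro p hp q hq - (⟨hx, hy, hc⟩ | ⟨hx, hy, hc⟩)
  exacts [absurd_of_corner hp hq hx hy hc, absurd_of_corner hq hp hx hy hc]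

end MinimalTree

section ReadingOrder

variable {ν : List Bool} {p : ℕ × ℕ} {C : Set (ℕ × ℕ)}

lemma mem_readingList_iff : p ∈ readingList ν ↔ p ∈ APts ν := by
  obtain ⟨x, y⟩ := p
  simp only [readingList, List.mem_flatten, List.mem_map, List.mem_range, exists_exists_and_eq_and,
    List.mem_filter, decide_eq_true_eq, Prod.mk.injEq, APts, Set.mem_ofPred_eq]
  constructor
  · rintro ⟨y, hy, x, ⟨hx, hxy⟩, rfl, rfl⟩
    exact ⟨by omega, hxy, by omega⟩
  · rintro ⟨hx, hxy, hy⟩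
    exact ⟨y, by omega, x, ⟨by omega, hxy⟩, rfl, rfl⟩

lemma pairwise_readingList :
    (readingList ν).Pairwise fun p q => toLex p.swap < toLex q.swap := by
  simp only [Prod.Lex.toLex_lt_toLex, Prod.fst_swap, Prod.snd_swap]
  rw [readingList, List.pairwise_flatten, List.forall_mem_map, List.pairwise_map]
  constructor
  · intro y _
    rw [List.pairwise_map]
    exact (List.pairwise_lt_range.filter _).imp fun h => .inr ⟨rfl, h⟩
  · refine List.pairwise_lt_range.imp fun {y y'} hy => ?_
    simp only [List.forall_mem_map]
    exact fun _ _ _ _ => .inl hy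

lemma nodup_readingList : (readingList ν).Nodup :=
  pairwise_readingList.imp fun h heq => (heq ▸ h).false

lemma length_readingList : (readingList ν).length = (APts ν).ncard := by
  rw [← List.toFinset_card_of_nodup nodup_readingList, ← Set.ncard_coe_finset]
  congr 1
  ext p
  rw [Finset.mem_coe, List.mem_toFinset, mem_readingList_iff]

lemma prod_map_filter_eq_prod_map_ite {α M : Type*} [Monoid M] (l : List α) (P : α → Prop)
    [DecidablePred P] (f : α → M) :
    ((l.filter P).map f).prod = (l.map fun a => if P a then f a else 1).prod := by
  induction l with
  | nil => rfl
  | cons a l ih => by_cases h : P a <;> simp [h, ih]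

lemma prodOver_eq_gridWord (hC : C ⊆ APts ν) :
    prodOver ν C = gridWord (eastSteps ν) (northSteps ν) C (northSteps ν + 1) := by
  rw [prodOver, prod_map_filter_eq_prod_map_ite, readingList, List.map_flatten, List.prod_flatten,
    List.map_map, List.map_map, gridWord]
  congr 1
  refine List.map_congr_left fun y hy => ?_
  have hy := List.mem_range.1 hy
  simp only [Function.comp_apply, List.map_map]
  rw [prod_map_filter_eq_prod_map_ite, rowWord]
  congr 1
  refine List.map_congr_left fun x _ => ?_
  by_cases h : (x, y) ∈ C
  · have label : dOf ν (x, y) + 1 = x + (northSteps ν + 1 - y) := by rw [dOf]; omega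
    simp only [Function.comp_apply, h, (hC h).2.1, if_true, labelPerm, ← label]
  · simp only [Function.comp_apply, h, if_false, ite_self]

lemma sum_count_eq_ncard {a b : ℕ} (hC : C ⊆ Set.Iio a ×ˢ Set.Iio b) :
    ∑ y ∈ Finset.range b, Nat.count (fun x => (x, y) ∈ C) a = C.ncard := by
  have hfinset : C = (((Finset.range a ×ˢ Finset.range b).filter (· ∈ C) : Finset _) : Set _) := by
    ext p
    simpa [← and_assoc] using @hC p
  conv_rhs => rw [hfinset, Set.ncard_coe_finset]
  simp only [Nat.count_eq_card_filter_range, Finset.card_filter]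
  rw [Finset.sum_comm, Finset.sum_product]

lemma lenInv_piNu : lenInv (piNu ν) = (APts ν \ TminSet ν).ncard := by
  have hC : APts ν \ TminSet ν ⊆ Set.Iio (eastSteps ν + 1) ×ˢ Set.Iio (northSteps ν + 1) :=
    fun p hp => ⟨Nat.lt_succ_of_le hp.1.1, Nat.lt_succ_of_le hp.1.2.2⟩
  change (inversions (piNu ν)).ncard = _
  rw [Set.ncard_def, piNu, prodOver_eq_gridWord Set.sdiff_subset, encard_inversions_gridWord,
    ENat.toNat_natCast, sum_count_eq_ncard hC]
  intro x _ y _ h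
  rw [APts_sdiff_TminSet] at h ⊢
  exact hPipe_lt_vPipe_dominantCrossings (heightAt_monotone ν) h

lemma lenInv_piNu_add :
    lenInv (piNu ν) + (eastSteps ν + northSteps ν + 1) = (readingList ν).length := by
  rw [lenInv_piNu, length_readingList, ← TopFunction.card_tree ⊥, ← Set.ncard_coe_finset,
    TopFunction.coe_tree_bot]
  refine Set.ncard_sdiff_add_ncard_of_subset (fun p hp => hp.1) ?_
  exact (readingList ν).toFinset.finite_toSet.subset fun p hp =>
    List.mem_toFinset.2 (mem_readingList_iff.2 hp)

end ReadingOrder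

section Positions

variable {ν : List Bool} {i j : ℕ} {p q : ℕ × ℕ} {S T : Finset (ℕ × ℕ)}

/-- The point at position `i` of the reading order, with the junk value `(0, 0)` when `i` is out of
range. -/
def readingPoint (ν : List Bool) (i : ℕ) : ℕ × ℕ := (readingList ν).getD i (0, 0)

lemma readingPoint_of_lt (hi : i < (readingList ν).length) :
    readingPoint ν i = (readingList ν)[i] :=
  List.getD_eq_getElem _ _ hi

lemma strictMonoOn_readingPoint :
    StrictMonoOn (fun i => toLex (readingPoint ν i).swap) (Set.Iio (readingList ν).length) := by
  intro i hi j hj hij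
  simp only [readingPoint_of_lt hi, readingPoint_of_lt hj]
  exact List.pairwise_iff_getElem.1 pairwise_readingList i j hi hj hij

lemma injOn_readingPoint : Set.InjOn (readingPoint ν) (Set.Iio (readingList ν).length) :=
  fun _ hi _ hj h => strictMonoOn_readingPoint.injOn hi hj (by simp only [h])

lemma readingPoint_mem (hi : i < (readingList ν).length) : readingPoint ν i ∈ APts ν := by
  rw [← mem_readingList_iff, readingPoint_of_lt hi]
  exact List.getElem_mem hi

lemma exists_readingPoint_eq (hp : p ∈ APts ν) :
    ∃ i < (readingList ν).length, readingPoint ν i = p := by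
  obtain ⟨i, hi, h⟩ := List.getElem_of_mem (mem_readingList_iff.2 hp)
  exact ⟨i, hi, (readingPoint_of_lt hi).trans h⟩

lemma readingList_eq_map :
    readingList ν = (List.range (readingList ν).length).map (readingPoint ν) := by
  refine List.ext_getElem (by simp) fun i hi _ => ?_
  rw [List.getElem_map, List.getElem_range, readingPoint_of_lt hi]

/-- The positions of the points of `T` in the reading order. -/
noncomputable def positions (ν : List Bool) (T : Finset (ℕ × ℕ)) : Finset ℕ :=
  (Finset.range (readingList ν).length).filter fun i => readingPoint ν i ∈ T

lemma mem_positions :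
    i ∈ positions ν T ↔ i < (readingList ν).length ∧ readingPoint ν i ∈ T := by
  rw [positions, Finset.mem_filter, Finset.mem_range]

lemma positions_subset_range : positions ν T ⊆ Finset.range (readingList ν).length :=
  Finset.filter_subset _ _

lemma image_positions (hT : (T : Set (ℕ × ℕ)) ⊆ APts ν) :
    (positions ν T).image (readingPoint ν) = T := by
  ext p
  simp only [Finset.mem_image, mem_positions]
  constructor
  · rintro ⟨i, hi, rfl⟩
    exact hi.2
  · intro hp
    obtain ⟨i, hi, rfl⟩ := exists_readingPoint_eq (hT hp)
    exact ⟨i, ⟨hi, hp⟩, rfl⟩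

lemma injOn_readingPoint_positions : Set.InjOn (readingPoint ν) (positions ν T) :=
  injOn_readingPoint.mono fun _ hi => (mem_positions.1 hi).1

lemma card_positions (hT : (T : Set (ℕ × ℕ)) ⊆ APts ν) : (positions ν T).card = T.card := by
  conv_rhs => rw [← image_positions hT]
  exact (Finset.card_image_of_injOn injOn_readingPoint_positions).symm

lemma exists_positions_eq {I : Finset ℕ} (hI : I ⊆ Finset.range (readingList ν).length) :
    ∃ T : Finset (ℕ × ℕ), ↑T ⊆ APts ν ∧ positions ν T = I := by
  have hlt {i : ℕ} (hi : i ∈ I) : i < (readingList ν).length := Finset.mem_range.1 (hI hi)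
  refine ⟨I.image (readingPoint ν), fun p hp => ?_, ?_⟩
  · obtain ⟨i, hi, rfl⟩ := Finset.mem_image.1 hp
    exact readingPoint_mem (hlt hi)
  · ext i
    rw [mem_positions, Finset.mem_image]
    constructor
    · rintro ⟨hi, j, hj, hij⟩
      exact injOn_readingPoint (hlt hj) hi hij ▸ hj
    · exact fun hi => ⟨hlt hi, i, hi, rfl⟩

lemma positions_erase (hi : i < (readingList ν).length) :
    positions ν (T.erase (readingPoint ν i)) = (positions ν T).erase i := by
  ext k
  simp only [mem_positions, Finset.mem_erase]
  constructor
  · rintro ⟨hk, hne, hT⟩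
    exact ⟨fun h => hne (h ▸ rfl), hk, hT⟩
  · rintro ⟨hne, hk, hT⟩
    exact ⟨hk, fun h => hne (injOn_readingPoint hk hi h), hT⟩

lemma prodAt_sdiff_positions :
    prodAt (Qword ν) (Finset.range (Qword ν).length \ positions ν T) = prodOver ν (APts ν \ T) := by
  have hlength : (Qword ν).length = (readingList ν).length := List.length_map _
  rw [prodAt, prodOver, readingList_eq_map, List.filter_map, List.map_map, hlength]
  refine congrArg List.prod (.trans (List.map_congr_left fun i hi => ?_)
    (congrArg _ (List.filter_congr fun i hi => ?_)))
  · have hi := List.mem_range.1 (List.mem_of_mem_filter hi)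
    simp [Qword, readingPoint, List.getElem?_eq_getElem hi]
  · have hi := List.mem_range.1 hi
    simp only [Function.comp_apply, Finset.mem_sdiff, Finset.mem_range,
      mem_positions, hi, true_and, Set.mem_sdiff, readingPoint_mem hi, Finset.mem_coe]

lemma isFacet_positions_iff (hT : (T : Set (ℕ × ℕ)) ⊆ APts ν) :
    IsFacet (Qword ν) (piNu ν) (positions ν T) ↔
      prodOver ν (APts ν \ T) = piNu ν ∧ T.card = eastSteps ν + northSteps ν + 1 := by
  have hlength : (Qword ν).length = (readingList ν).length := List.length_map _
  have hcard := Finset.card_le_card (positions_subset_range (ν := ν) (T := T))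
  have := lenInv_piNu_add (ν := ν)
  rw [IsFacet, prodAt_sdiff_positions, hlength, Finset.card_sdiff_of_subset positions_subset_range]
  rw [Finset.card_range] at hcard ⊢
  rw [card_positions hT] at hcard ⊢
  constructor
  · rintro ⟨-, hw, hc⟩
    exact ⟨hw, by omega⟩
  · rintro ⟨hw, hc⟩
    exact ⟨positions_subset_range, hw, by omega⟩

end Positions

section Facets

variable {ν : List Bool} {φ ψ : TopFunction ν}

/-- The facet of the subword complex that consists of the positions of the tree of `φ`. -/
noncomputable def facet (φ : TopFunction ν) : Finset ℕ := positions ν φ.tree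

lemma isFacet_facet (φ : TopFunction ν) : IsFacet (Qword ν) (piNu ν) (facet φ) := by
  rw [facet, isFacet_positions_iff φ.tree_subset_APts, piNu,
    prodOver_eq_gridWord Set.sdiff_subset, prodOver_eq_gridWord Set.sdiff_subset]
  exact ⟨φ.gridWord_sdiff_tree, φ.card_tree⟩

lemma exists_eq_facet {I : Finset ℕ} (hI : IsFacet (Qword ν) (piNu ν) I) :
    ∃ φ : TopFunction ν, I = facet φ := by
  have hlength : (Qword ν).length = (readingList ν).length := List.length_map _
  obtain ⟨T, hT, rfl⟩ := exists_positions_eq (hlength ▸ hI.1)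
  obtain ⟨hw, hcard⟩ := (isFacet_positions_iff hT).1 hI
  rw [piNu, prodOver_eq_gridWord Set.sdiff_subset, prodOver_eq_gridWord Set.sdiff_subset] at hw
  obtain ⟨φ, rfl⟩ := exists_tree_eq hT (pairwise_compatible_of_gridWord_eq hw hT) hcard
  exact ⟨φ, rfl⟩

lemma incFlip_facet_of_isRightRotation (h : IsRightRotation φ.tree ψ.tree) :
    IncFlip (Qword ν) (piNu ν) (facet φ) (facet ψ) := by
  obtain ⟨q, q', h⟩ := h
  have hq' : q' ∉ φ.tree := TopFunction.notMem_tree_of_isRightRotationAt h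
  obtain ⟨x, y, x', y', rfl, rfl, -, hy, hq, -, -, -, -, -, -, hψ⟩ := h
  have tree_eq : ψ.tree = insert (x', y') (φ.tree.erase (x, y)) := by
    rw [← Finset.coe_inj, hψ, Finset.coe_insert, Finset.coe_erase, Set.union_singleton]
  have hq'ψ : (x', y') ∈ ψ.tree := tree_eq ▸ Finset.mem_insert_self _ _
  obtain ⟨i, hi, hiq⟩ := exists_readingPoint_eq (φ.tree_subset_APts hq)
  obtain ⟨j, hj, hjq'⟩ := exists_readingPoint_eq (ψ.tree_subset_APts hq'ψ)
  have hij : i < j := by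
    rw [← strictMonoOn_readingPoint.lt_iff_lt hi hj, hiq, hjq', Prod.Lex.toLex_lt_toLex]
    exact .inl hy
  refine ⟨isFacet_facet φ, isFacet_facet ψ, i, mem_positions.2 ⟨hi, hiq ▸ hq⟩, j,
    mem_positions.2 ⟨hj, hjq' ▸ hq'ψ⟩, hij, ?_⟩
  rw [facet, facet, ← positions_erase hi, ← positions_erase hj, hiq, hjq', tree_eq,
    Finset.erase_insert (mt Finset.mem_of_mem_erase hq')]

lemma le_of_incFlip_facet (h : IncFlip (Qword ν) (piNu ν) (facet φ) (facet ψ)) : φ ≤ ψ := by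
  obtain ⟨-, -, i, hi, j, hj, hij, herase⟩ := h
  have hi := (mem_positions.1 hi).1
  have hj := (mem_positions.1 hj).1
  have row_le : (readingPoint ν i).2 ≤ (readingPoint ν j).2 :=
    (Prod.Lex.toLex_lt_toLex.1 (strictMonoOn_readingPoint hi hj hij)).elim le_of_lt
      fun h => h.1.le
  refine TopFunction.le_of_tree_erase_eq row_le ?_
  rw [facet, facet, ← positions_erase hi, ← positions_erase hj] at herase
  have subset_APts (χ : TopFunction ν) (p : ℕ × ℕ) : (χ.tree.erase p : Set _) ⊆ APts ν :=
    (Finset.coe_subset.2 (Finset.erase_subset _ _)).trans χ.tree_subset_APts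
  rw [← image_positions (subset_APts φ _), herase, image_positions (subset_APts ψ _)]

lemma facet_injective : Function.Injective (facet (ν := ν)) := by
  intro φ ψ h
  have htree : φ.tree = ψ.tree := by
    rw [← image_positions φ.tree_subset_APts, ← image_positions ψ.tree_subset_APts]
    exact congrArg _ h
  exact (TopFunction.le_of_tree_subset htree.le).antisymm
    (TopFunction.le_of_tree_subset htree.ge)

lemma flipLE_facet_iff : FlipLE (Qword ν) (piNu ν) (facet φ) (facet ψ) ↔ φ ≤ ψ := by
  constructor
  · intro h
    generalize hJ : facet ψ = J at h
    induction h generalizing ψ with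
    | refl => exact (facet_injective hJ).ge
    | tail _ hflip ih =>
      obtain ⟨χ, rfl⟩ := exists_eq_facet hflip.1
      exact (ih rfl).trans (le_of_incFlip_facet (hJ ▸ hflip))
  · exact fun h => Relation.ReflTransGen.lift facet
      (fun _ _ => incFlip_facet_of_isRightRotation) _ _ (TopFunction.reflTransGen_isRightRotation h)

end Facets

theorem increasing_flip_poset_is_lattice (ν : List Bool) (I J : Finset ℕ)
    (hI : IsFacet (Qword ν) (piNu ν) I) (hJ : IsFacet (Qword ν) (piNu ν) J) :
    (∃ M, IsFacet (Qword ν) (piNu ν) M ∧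
      FlipLE (Qword ν) (piNu ν) M I ∧ FlipLE (Qword ν) (piNu ν) M J ∧
      ∀ S, IsFacet (Qword ν) (piNu ν) S → FlipLE (Qword ν) (piNu ν) S I →
        FlipLE (Qword ν) (piNu ν) S J → FlipLE (Qword ν) (piNu ν) S M) ∧
    (∃ K, IsFacet (Qword ν) (piNu ν) K ∧
      FlipLE (Qword ν) (piNu ν) I K ∧ FlipLE (Qword ν) (piNu ν) J K ∧
      ∀ S, IsFacet (Qword ν) (piNu ν) S → FlipLE (Qword ν) (piNu ν) I S →
        FlipLE (Qword ν) (piNu ν) J S → FlipLE (Qword ν) (piNu ν) K S) := by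
  obtain ⟨φ, rfl⟩ := exists_eq_facet hI
  obtain ⟨ψ, rfl⟩ := exists_eq_facet hJ
  constructor
  · refine ⟨facet (φ ⊓ ψ), isFacet_facet _, flipLE_facet_iff.2 inf_le_left,
      flipLE_facet_iff.2 inf_le_right, fun S hS hφ hψ => ?_⟩
    obtain ⟨χ, rfl⟩ := exists_eq_facet hS
    exact flipLE_facet_iff.2 (le_inf (flipLE_facet_iff.1 hφ) (flipLE_facet_iff.1 hψ))
  · refine ⟨facet (φ ⊔ ψ), isFacet_facet _, flipLE_facet_iff.2 le_sup_left,
      flipLE_facet_iff.2 le_sup_right, fun S hS hφ hψ => ?_⟩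
    obtain ⟨χ, rfl⟩ := exists_eq_facet hS
    exact flipLE_facet_iff.2 (sup_le (flipLE_facet_iff.1 hφ) (flipLE_facet_iff.1 hψ))
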